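/- arXiv:2601.15258 — 3 statements merged into one kernel-verified Lean document; each statement's English description precedes it below -/
import Mathlib

section
/- For any number of groups m ≥ 2 and any parameters θ, ℓ, r ∈ (0,1] with ⌈ℓm⌉ < ⌈rm⌉, the mechanism M_m(θ,ℓ,r) for k = 2 facilities is strategyproof, both in the sum-variant and in the max-variant. -/
open Finset

noncomputable section

/-- A distributed facility location setting for `k` facilities and `m` groups:
`n ≥ 2` agents on the real line, partitioned into `m ≥ k` disjoint nonempty groups. -/
structure FLSetting (k m : ℕ) where
  n : ℕ
  hn : 2 ≤ n
  hmk : k ≤ m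
  grp : Fin n → Fin m
  surj : Function.Surjective grp

/-- A two-phase mechanism for `k` facilities: for each number `m` of groups, a
representative function on finite multisets of reals, and a selection function
producing the `k` facility locations from the multiset of representatives. -/
structure TwoPhase (k : ℕ) where
  rep : ℕ → Multiset ℝ → ℝ
  sel : ℕ → Multiset ℝ → Fin k → ℝ

/-- Validity of a two-phase mechanism: the representative of a nonempty multiset
is one of its elements, and the selected facility locations form a sub-multiset
of the representatives. -/
def TwoPhase.Valid {k : ℕ} (M : TwoPhase k) : Prop :=
  (∀ (m : ℕ) (S : Multiset ℝ), S ≠ 0 → M.rep m S ∈ S) ∧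
  (∀ (m : ℕ) (R : Multiset ℝ), Multiset.card R = m → k ≤ m →
    (↑(List.ofFn (M.sel m R)) : Multiset ℝ) ≤ R)

/-- The multiset of (reported) positions of the agents in group `j`. -/
def groupMS {k m : ℕ} (S : FLSetting k m) (x : Fin S.n → ℝ) (j : Fin m) : Multiset ℝ :=
  (Finset.univ.filter (fun i => S.grp i = j)).val.map x

/-- The number of agents in group `j`. -/
def groupSize {k m : ℕ} (S : FLSetting k m) (j : Fin m) : ℕ :=
  (Finset.univ.filter (fun i => S.grp i = j)).card

/-- The multiset of the `m` group representatives. -/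
def repsMS {k m : ℕ} (M : TwoPhase k) (S : FLSetting k m) (x : Fin S.n → ℝ) : Multiset ℝ :=
  (Finset.univ.val.map fun j : Fin m => M.rep m (groupMS S x j))

/-- The facility locations output by mechanism `M` on reported positions `x`. -/
def outcome {k m : ℕ} (M : TwoPhase k) (S : FLSetting k m) (x : Fin S.n → ℝ) : Fin k → ℝ :=
  M.sel m (repsMS M S x)

/-- Sum-variant individual cost: total distance to all facilities. -/
def sumCost (k : ℕ) (xi : ℝ) (y : Fin k → ℝ) : ℝ := ∑ ℓ, |xi - y ℓ|

/-- Max-variant individual cost: distance to the farthest facility. -/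
def maxCost (k : ℕ) (xi : ℝ) (y : Fin k → ℝ) : ℝ := ⨆ ℓ, |xi - y ℓ|

/-- Social cost: average over groups of the average individual cost within the group. -/
def SC {k m : ℕ} (cost : ℝ → (Fin k → ℝ) → ℝ) (S : FLSetting k m) (x : Fin S.n → ℝ)
    (y : Fin k → ℝ) : ℝ :=
  (1 / (m : ℝ)) * ∑ j : Fin m,
    (1 / (groupSize S j : ℝ)) *
      ∑ i ∈ Finset.univ.filter (fun i => S.grp i = j), cost (x i) y

/-- A feasible solution opens the `k` facilities at the positions of `k` distinct agents. -/
def Feasible {k m : ℕ} (S : FLSetting k m) (x : Fin S.n → ℝ) (y : Fin k → ℝ) : Prop :=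
  ∃ f : Fin k → Fin S.n, Function.Injective f ∧ ∀ ℓ, y ℓ = x (f ℓ)

/-- Strategyproofness with respect to an individual cost function. -/
def Strategyproof {k : ℕ} (cost : ℝ → (Fin k → ℝ) → ℝ) (M : TwoPhase k) : Prop :=
  ∀ (m : ℕ) (S : FLSetting k m) (x : Fin S.n → ℝ) (i : Fin S.n) (x' : ℝ),
    cost (x i) (outcome M S x) ≤ cost (x i) (outcome M S (Function.update x i x'))

/-- Strategyproofness restricted to instances with exactly `m` groups. -/
def StrategyproofOn {k : ℕ} (cost : ℝ → (Fin k → ℝ) → ℝ) (M : TwoPhase k) (m : ℕ) : Prop :=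
  ∀ (S : FLSetting k m) (x : Fin S.n → ℝ) (i : Fin S.n) (x' : ℝ),
    cost (x i) (outcome M S x) ≤ cost (x i) (outcome M S (Function.update x i x'))

/-- The `t`-th leftmost element of a multiset of reals (1-indexed). -/
def kthLeftmost (S : Multiset ℝ) (t : ℕ) : ℝ := (S.sort (· ≤ ·)).getD (t - 1) 0

/-- The mechanism `M_m(θ, ℓ, r)` for two facilities: each group's representative is the
position of its `⌈θ·n_g⌉`-th leftmost agent, and the facilities are opened at the
`⌈ℓm⌉`-th and `⌈rm⌉`-th leftmost representative locations. -/
def Mmech (θ l r : ℝ) : TwoPhase 2 where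
  rep := fun _ S => kthLeftmost S ⌈θ * (Multiset.card S : ℝ)⌉₊
  sel := fun m R => ![kthLeftmost R ⌈l * (m : ℝ)⌉₊, kthLeftmost R ⌈r * (m : ℝ)⌉₊]

/-! When an agent at `p` misreports, every reported position moves away from `p`: her own starts at
`p`, and the others stay put. Order statistics turn such moves of their entries into moves away from
`p` of their value, as counting the entries below a threshold shows. Applying this in both phases,
each facility moves away from `p`, so no cost that is monotone in the distances can decrease. -/

/-- A statistic `A` of `n` reals preserves betweenness if `A S` lies between `p` and `A T` whenever
the `n` entries of `S` can be matched with those of `T` so that each lies between `p` and its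
partner. Stated on multisets, since both phases of a mechanism are anonymous. -/
def PreservesBetweenness (n : ℕ) (A : Multiset ℝ → ℝ) : Prop :=
  ∀ ⦃p : ℝ⦄ ⦃S T : Multiset ℝ⦄, Multiset.card S = n →
    Multiset.Rel (fun u v => u ∈ Set.uIcc p v) S T → A S ∈ Set.uIcc p (A T)

theorem PreservesBetweenness.map {ι : Type*} {n : ℕ} {A : Multiset ℝ → ℝ}
    (hA : PreservesBetweenness n A) {s : Multiset ι} (hs : Multiset.card s = n) {f g : ι → ℝ}
    {p : ℝ} (h : ∀ i ∈ s, f i ∈ Set.uIcc p (g i)) : A (s.map f) ∈ Set.uIcc p (A (s.map g)) :=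
  hA ((Multiset.card_map f s).trans hs) (Multiset.rel_map.2 (Multiset.rel_refl_of_refl_on h))

theorem PreservesBetweenness.congr {n : ℕ} {A B : Multiset ℝ → ℝ}
    (hA : PreservesBetweenness n A) (hAB : ∀ S, Multiset.card S = n → A S = B S) :
    PreservesBetweenness n B := by
  intro p S T hS hST
  rw [← hAB S hS, ← hAB T ((Multiset.card_eq_card_of_rel hST).symm.trans hS)]
  exact hA hS hST

theorem countP_le_countP_of_rel {α β : Type*} {R : α → β → Prop} {p : α → Prop} {q : β → Prop}
    [DecidablePred p] [DecidablePred q] {S : Multiset α} {T : Multiset β}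
    (h : Multiset.Rel R S T) (hpq : ∀ a b, R a b → p a → q b) : S.countP p ≤ T.countP q := by
  induction h with
  | zero => simp
  | @cons a b _ _ hab _ ih =>
    rw [Multiset.countP_cons, Multiset.countP_cons]
    have := hpq a b hab
    grind

theorem lt_countP_le_iff_getElem_le {α : Type*} [PartialOrder α] [DecidableLE α] {L : List α}
    (hL : L.SortedLE) {q : ℕ} (hq : q < L.length) (a : α) :
    q < L.countP (· ≤ a) ↔ L[q] ≤ a := by
  have hmap : univ.val.map L.get = L := by rw [Fin.univ_val_map, List.ofFn_get]
  have hcount : L.countP (· ≤ a) = #{j | L.get j ≤ a} := by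
    rw [← Multiset.coe_countP]
    exact (congrArg (Multiset.countP (· ≤ a)) hmap.symm).trans (Multiset.countP_map _ _ _)
  rw [hcount]
  exact Tuple.lt_card_le_iff_apply_le_of_monotone (j := ⟨q, hq⟩) hL.monotone_get

theorem kthLeftmost_le_iff {S : Multiset ℝ} {t : ℕ} (ht : t ∈ Set.Icc 1 (Multiset.card S)) (a : ℝ) :
    kthLeftmost S t ≤ a ↔ t ≤ S.countP (· ≤ a) := by
  obtain ⟨hpos, hle⟩ := ht
  have hlt : t - 1 < (S.sort (· ≤ ·)).length := by
    rw [Multiset.length_sort]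
    exact Nat.sub_one_lt_of_le hpos hle
  have hcount : (S.sort (· ≤ ·)).countP (· ≤ a) = S.countP (· ≤ a) := by
    rw [← Multiset.coe_countP, Multiset.sort_eq]
  rw [kthLeftmost, List.getD_eq_getElem _ _ hlt, ← hcount,
    ← lt_countP_le_iff_getElem_le (Multiset.pairwise_sort S (· ≤ ·)).sortedLE hlt]
  lia

theorem preservesBetweenness_kthLeftmost {t n : ℕ} (ht : t ∈ Set.Icc 1 n) :
    PreservesBetweenness n fun S => kthLeftmost S t := by
  intro p S T hS hST
  have hT : Multiset.card T = n := (Multiset.card_eq_card_of_rel hST).symm.trans hS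
  have hkS := kthLeftmost_le_iff (hS.symm ▸ ht)
  have hkT := kthLeftmost_le_iff (hT.symm ▸ ht)
  have lower : p ⊓ kthLeftmost T t ≤ kthLeftmost S t := by
    rcases le_or_gt p (kthLeftmost S t) with hp | hp
    · exact inf_le_of_left_le hp
    · have hcount := countP_le_countP_of_rel hST (p := (· ≤ kthLeftmost S t))
        (q := (· ≤ kthLeftmost S t)) fun u v huv hu =>
          (inf_le_iff.1 (huv.1.trans hu)).resolve_left hp.not_ge
      exact inf_le_of_right_le ((hkT _).2 (((hkS _).1 le_rfl).trans hcount))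
  have upper : kthLeftmost S t ≤ p ⊔ kthLeftmost T t := by
    have hcount := countP_le_countP_of_rel (Multiset.rel_flip.2 hST)
      (p := (· ≤ p ⊔ kthLeftmost T t)) (q := (· ≤ p ⊔ kthLeftmost T t)) fun v u huv hv =>
        huv.2.trans (sup_le le_sup_left hv)
    exact (hkS _).2 (((hkT _).1 le_sup_right).trans hcount)
  exact ⟨lower, upper⟩

/-- An individual cost function is monotone in distances if an agent never prefers facilities each
of which is at least as far from her. This is all that strategyproofness needs to know about the
sum- and max-variants. -/
def MonotoneInDistances {k : ℕ} (cost : ℝ → (Fin k → ℝ) → ℝ) : Prop :=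
  ∀ ⦃p : ℝ⦄ ⦃y z : Fin k → ℝ⦄, (∀ j, |p - y j| ≤ |p - z j|) → cost p y ≤ cost p z

theorem monotoneInDistances_sumCost (k : ℕ) : MonotoneInDistances (sumCost k) :=
  fun _ _ _ h => sum_le_sum fun j _ => h j

theorem monotoneInDistances_maxCost (k : ℕ) : MonotoneInDistances (maxCost k) :=
  fun _ _ _ h => ciSup_mono (Set.finite_range _).bddAbove h

theorem apply_mem_uIcc_update {ι α : Type*} [DecidableEq ι] [Lattice α] (x : ι → α) (i : ι)
    (x' : α) (a : ι) : x a ∈ Set.uIcc (x i) (Function.update x i x' a) := by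
  rcases eq_or_ne a i with rfl | ha
  · exact Set.left_mem_uIcc
  · rw [Function.update_of_ne ha]
    exact Set.right_mem_uIcc

theorem groupSize_pos {k m : ℕ} (S : FLSetting k m) (j : Fin m) : 0 < groupSize S j := by
  obtain ⟨i, hi⟩ := S.surj j
  exact card_pos.2 ⟨i, mem_filter.2 ⟨mem_univ i, hi⟩⟩

theorem strategyproofOn_of_preservesBetweenness {k m : ℕ} {M : TwoPhase k}
    (hrep : ∀ n, 0 < n → PreservesBetweenness n (M.rep m))
    (hsel : ∀ j, PreservesBetweenness m fun R => M.sel m R j)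
    {cost : ℝ → (Fin k → ℝ) → ℝ} (hcost : MonotoneInDistances cost) :
    StrategyproofOn cost M m := by
  intro S x i x'
  have hreps (g : Fin m) : M.rep m (groupMS S x g) ∈
      Set.uIcc (x i) (M.rep m (groupMS S (Function.update x i x') g)) :=
    (hrep _ (groupSize_pos S g)).map rfl fun a _ => apply_mem_uIcc_update x i x' a
  have hfacility (j : Fin k) : outcome M S x j ∈
      Set.uIcc (x i) (outcome M S (Function.update x i x') j) :=
    (hsel j).map (card_fin m) fun g _ => hreps g
  exact hcost fun j => Set.abs_sub_right_of_mem_uIcc (Set.uIcc_comm (x i) _ ▸ hfacility j)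

theorem natCeil_mul_mem_Icc {R : Type*} [Semiring R] [LinearOrder R] [IsStrictOrderedRing R]
    [FloorSemiring R] {c : R} (hc : c ∈ Set.Ioc 0 1) {n : ℕ} (hn : 0 < n) :
    ⌈c * (n : R)⌉₊ ∈ Set.Icc 1 n :=
  ⟨Nat.one_le_ceil_iff.2 (mul_pos hc.1 (Nat.cast_pos.2 hn)),
    Nat.ceil_le.2 (mul_le_of_le_one_left n.cast_nonneg hc.2)⟩

theorem stmt0_general {m : ℕ} {θ l r : ℝ} (hθ : θ ∈ Set.Ioc (0 : ℝ) 1)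
    (hl : l ∈ Set.Ioc (0 : ℝ) 1) (hr : r ∈ Set.Ioc (0 : ℝ) 1)
    {cost : ℝ → (Fin 2 → ℝ) → ℝ} (hcost : MonotoneInDistances cost) :
    StrategyproofOn cost (Mmech θ l r) m := by
  intro S
  have hm : 0 < m := two_pos.trans_le S.hmk
  refine strategyproofOn_of_preservesBetweenness (fun n hn => ?_) (fun j => ?_) hcost S
  · exact (preservesBetweenness_kthLeftmost (natCeil_mul_mem_Icc hθ hn)).congr
      fun R hR => by simp only [Mmech, hR]
  · fin_cases j
    · exact preservesBetweenness_kthLeftmost (natCeil_mul_mem_Icc hl hm)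
    · exact preservesBetweenness_kthLeftmost (natCeil_mul_mem_Icc hr hm)

/-- For any `m ≥ 2` and `θ, ℓ, r ∈ (0,1]` with `⌈ℓm⌉ < ⌈rm⌉`, the mechanism
`M_m(θ,ℓ,r)` for two facilities is strategyproof in both the sum- and the max-variant. -/
theorem stmt0 (m : ℕ) (hm : 2 ≤ m) (θ l r : ℝ)
    (hθ : θ ∈ Set.Ioc (0 : ℝ) 1) (hl : l ∈ Set.Ioc (0 : ℝ) 1) (hr : r ∈ Set.Ioc (0 : ℝ) 1)
    (hlr : ⌈l * (m : ℝ)⌉₊ < ⌈r * (m : ℝ)⌉₊) :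
    StrategyproofOn (sumCost 2) (Mmech θ l r) m ∧
    StrategyproofOn (maxCost 2) (Mmech θ l r) m :=
  ⟨stmt0_general hθ hl hr (monotoneInDistances_sumCost 2),
    stmt0_general hθ hl hr (monotoneInDistances_maxCost 2)⟩

end
end

section
/- Let Y = 1 in the sum-variant and Y = 0 in the max-variant. For any m ≥ 2 and θ, ℓ, r ∈ (0,1] with ⌈ℓm⌉ < ⌈rm⌉, on every instance with m groups all of equal size n/m, the social cost of the solution output by mechanism M_m(θ,ℓ,r) is at most max{ n/((m+1−⌈ℓm⌉)·(n/m + 1 − ⌈θn/m⌉)) − 1, n/((1+Y)·(m+1−⌈rm⌉)·(n/m + 1 − ⌈θn/m⌉)), n/(⌈rm⌉·⌈θn/m⌉) − 1, n/((1+Y)·⌈ℓm⌉·⌈θn/m⌉) } times the minimum social cost over all feasible solutions. -/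
open Finset

noncomputable section

/-- The approximation-ratio bound of Theorem 3 (`Y = 1` for the sum-variant,
`Y = 0` for the max-variant). -/
def approxBound (n m : ℕ) (θ l r Y : ℝ) : ℝ :=
  let N : ℝ := n
  let Mm : ℝ := m
  let g : ℝ := N / Mm
  let L : ℝ := ⌈l * Mm⌉₊
  let R : ℝ := ⌈r * Mm⌉₊
  let T : ℝ := ⌈θ * g⌉₊
  max (max (N / ((Mm + 1 - L) * (g + 1 - T)) - 1)
           (N / ((1 + Y) * (Mm + 1 - R) * (g + 1 - T))))
      (max (N / (R * T) - 1) (N / ((1 + Y) * L * T)))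

/-! Write `u ≤ v` for the two output facilities and `B` for the bound. If `t` representatives lie
weakly left of a point, then so do `⌈θ * n / m⌉` agents of each of the `t` groups; hence the
terms of `B` control how many agents lie weakly left and weakly right of `u` and of `v`.

Moving a facility from `a` to `w ≤ a` increases the total distance to the agents by at most
`(a - w) * (n - 2 * #{i | x i ≤ w})`, and symmetrically. It follows that projecting an arbitrary
facility onto `[u, v]` costs at most a factor `B`, with enough to spare to pay for moving the
projections of both facilities on to `u` and `v`. In the max-variant the same slack, for only one of
the two facilities, already dominates the cost of `u` and `v`. -/

section Quantiles

lemma kthLeftmost_eq_getElem {S : Multiset ℝ} {t : ℕ} (h : t - 1 < (S.sort (· ≤ ·)).length) :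
    kthLeftmost S t = (S.sort (· ≤ ·))[t - 1] :=
  List.getD_eq_getElem _ _ h

lemma kthLeftmost_le_kthLeftmost {S : Multiset ℝ} {s t : ℕ} (hst : s ≤ t) (hs : 0 < s)
    (ht : t ≤ S.card) : kthLeftmost S s ≤ kthLeftmost S t := by
  have hlen : (S.sort (· ≤ ·)).length = S.card := Multiset.length_sort _
  rw [kthLeftmost_eq_getElem (by lia), kthLeftmost_eq_getElem (by lia)]
  exact (Multiset.pairwise_sort S (· ≤ ·)).sortedLE.getElem_le_getElem_of_le (by lia)

lemma le_countP_of_sublist_sort {S : Multiset ℝ} {L : List ℝ} {p : ℝ → Prop} [DecidablePred p]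
    (hL : L.Sublist (S.sort (· ≤ ·))) (hp : ∀ a ∈ L, p a) : L.length ≤ S.countP p :=
  calc L.length = L.countP p := (List.countP_eq_length.2 fun a ha => decide_eq_true (hp a ha)).symm
    _ ≤ (S.sort (· ≤ ·)).countP p := hL.countP_le
    _ = S.countP p := by rw [← Multiset.coe_countP, Multiset.sort_eq]

lemma le_countP_le_of_kthLeftmost_le {S : Multiset ℝ} {t : ℕ} {v : ℝ} (ht : t ≤ S.card)
    (h : kthLeftmost S t ≤ v) : t ≤ S.countP (· ≤ v) := by
  have hlen : (S.sort (· ≤ ·)).length = S.card := Multiset.length_sort _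
  have htake : ((S.sort (· ≤ ·)).take t).length = t := by simpa using ht
  rw [← htake]
  refine le_countP_of_sublist_sort (List.take_sublist _ _) fun a ha => ?_
  obtain ⟨i, hi, rfl⟩ := List.mem_iff_getElem.1 ha
  rw [kthLeftmost_eq_getElem (by lia)] at h
  rw [List.getElem_take]
  exact ((Multiset.pairwise_sort S (· ≤ ·)).sortedLE.getElem_le_getElem_of_le (by lia)).trans h

lemma le_countP_ge_of_le_kthLeftmost {S : Multiset ℝ} {t : ℕ} {v : ℝ} (ht₀ : 0 < t)
    (ht : t ≤ S.card) (h : v ≤ kthLeftmost S t) : S.card + 1 - t ≤ S.countP (v ≤ ·) := by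
  have hlen : (S.sort (· ≤ ·)).length = S.card := Multiset.length_sort _
  have hdrop : ((S.sort (· ≤ ·)).drop (t - 1)).length = S.card + 1 - t := by
    rw [List.length_drop]
    lia
  rw [← hdrop]
  refine le_countP_of_sublist_sort (List.drop_sublist _ _) fun a ha => ?_
  obtain ⟨i, hi, rfl⟩ := List.mem_iff_getElem.1 ha
  rw [kthLeftmost_eq_getElem (by lia)] at h
  rw [List.getElem_drop]
  exact h.trans ((Multiset.pairwise_sort S (· ≤ ·)).sortedLE.getElem_le_getElem_of_le (by lia))

end Quantiles

section Distances

variable {ι 𝕜 : Type*} [Fintype ι] [CommRing 𝕜] [LinearOrder 𝕜] [IsStrictOrderedRing 𝕜]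

lemma sum_abs_sub_le_of_le (x : ι → 𝕜) {u a : 𝕜} (h : u ≤ a) :
    ∑ i, |x i - u| ≤ ∑ i, |x i - a| + (a - u) * (Fintype.card ι - 2 * #{i | x i ≤ u}) := by
  have pointwise (t : 𝕜) : |t - u| ≤ |t - a| + (a - u) * (1 - 2 * if t ≤ u then 1 else 0) := by
    split_ifs <;> grind
  simpa [sum_add_distrib, ← mul_sum, sum_sub_distrib, -mul_ite] using
    sum_le_sum fun i (_ : i ∈ univ) => pointwise (x i)

lemma sum_abs_sub_le_of_ge (x : ι → 𝕜) {a v : 𝕜} (h : a ≤ v) :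
    ∑ i, |x i - v| ≤ ∑ i, |x i - a| + (v - a) * (Fintype.card ι - 2 * #{i | v ≤ x i}) := by
  simpa [neg_add_eq_sub, abs_sub_comm] using
    sum_abs_sub_le_of_le (fun i => -x i) (neg_le_neg h)

lemma mul_card_add_mul_card_le_sum_abs_sub (x : ι → 𝕜) {u a : 𝕜} (hua : u ≤ a) (v : 𝕜) :
    (a - u) * #{i | x i ≤ u} + (v - a) * #{i | v ≤ x i} ≤ ∑ i, |x i - a| := by
  have pointwise (t : 𝕜) :
      (a - u) * (if t ≤ u then 1 else 0) + (v - a) * (if v ≤ t then 1 else 0) ≤ |t - a| := by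
    split_ifs <;> grind
  simpa [sum_add_distrib, ← mul_sum, -mul_ite] using
    sum_le_sum fun i (_ : i ∈ univ) => pointwise (x i)

lemma mul_card_le_add_mul_card_le_le_sum_abs_sub (x : ι → 𝕜) {u v a : 𝕜} (huv : u ≤ v)
    (hva : v ≤ a) :
    (v - u) * #{i | x i ≤ u} + (a - v) * #{i | x i ≤ v} ≤ ∑ i, |x i - a| := by
  have pointwise (t : 𝕜) :
      (v - u) * (if t ≤ u then 1 else 0) + (a - v) * (if t ≤ v then 1 else 0) ≤ |t - a| := by
    split_ifs <;> grind
  simpa [sum_add_distrib, ← mul_sum, -mul_ite] using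
    sum_le_sum fun i (_ : i ∈ univ) => pointwise (x i)

lemma mul_card_ge_add_mul_card_ge_le_sum_abs_sub (x : ι → 𝕜) {a u v : 𝕜} (hau : a ≤ u)
    (huv : u ≤ v) :
    (v - u) * #{i | v ≤ x i} + (u - a) * #{i | u ≤ x i} ≤ ∑ i, |x i - a| := by
  simpa [neg_add_eq_sub, abs_sub_comm] using
    mul_card_le_add_mul_card_le_le_sum_abs_sub (fun i => -x i) (neg_le_neg huv) (neg_le_neg hau)

lemma sum_max_abs_sub_le_add (x : ι → 𝕜) {u a v : 𝕜} (hua : u ≤ a) (hav : a ≤ v) :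
    ∑ i, max |x i - u| |x i - v| ≤ ∑ i, |x i - a|
      + (a - u) * (Fintype.card ι - #{i | x i ≤ u})
      + (v - a) * (Fintype.card ι - #{i | v ≤ x i}) := by
  have pointwise (t : 𝕜) : max |t - u| |t - v| ≤ |t - a|
      + (a - u) * (1 - if t ≤ u then 1 else 0) + (v - a) * (1 - if v ≤ t then 1 else 0) := by
    split_ifs <;> grind
  simpa [sum_add_distrib, ← mul_sum, sum_sub_distrib, -mul_ite] using
    sum_le_sum fun i (_ : i ∈ univ) => pointwise (x i)

end Distances

/-- The condition on two facilities `u` and `v` under which they are `B`-approximate. The case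
`Y = 1` serves the sum-variant and the case `Y = 0` the max-variant, as in `approxBound`. The two
inequalities with `B + 1` say that at most a fraction `B / (B + 1)` of the points is strictly left
of `u`, and likewise strictly right of `v`. -/
structure BalancedPair {ι 𝕜 : Type*} [Fintype ι] [CommRing 𝕜] [LinearOrder 𝕜] (Y B : 𝕜)
    (x : ι → 𝕜) (u v : 𝕜) : Prop where
  le : u ≤ v
  one_le : 1 ≤ B
  card_le_left : (Fintype.card ι : 𝕜) ≤ (1 + Y) * B * #{i | x i ≤ u}
  card_le_right : (Fintype.card ι : 𝕜) ≤ (1 + Y) * B * #{i | v ≤ x i}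
  card_le_left_of_right : (Fintype.card ι : 𝕜) ≤ (B + 1) * #{i | x i ≤ v}
  card_le_right_of_left : (Fintype.card ι : 𝕜) ≤ (B + 1) * #{i | u ≤ x i}

namespace BalancedPair

variable {ι 𝕜 : Type*} [Fintype ι] [CommRing 𝕜] [LinearOrder 𝕜] [IsStrictOrderedRing 𝕜]
  {Y B : 𝕜} {x : ι → 𝕜} {u v : 𝕜}

lemma sum_abs_sub_clamp_le (h : BalancedPair Y B x u v) (a : 𝕜) :
    ∑ i, |x i - max u (min a v)| + (B - 1) * ((max u (min a v) - u) * #{i | x i ≤ u}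
      + (v - max u (min a v)) * #{i | v ≤ x i}) ≤ B * ∑ i, |x i - a| := by
  have hB : 0 ≤ B - 1 := sub_nonneg.2 h.one_le
  rcases le_total a u with hau | hua
  · have hclamp : max u (min a v) = u := max_eq_left ((min_le_left _ _).trans hau)
    have hlower := mul_le_mul_of_nonneg_left
      (mul_card_ge_add_mul_card_ge_le_sum_abs_sub x hau h.le) hB
    have hcard := mul_le_mul_of_nonneg_left h.card_le_right_of_left (sub_nonneg.2 hau)
    rw [hclamp]
    linarith [sum_abs_sub_le_of_ge x hau]
  rcases le_total a v with hav | hva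
  · have hclamp : max u (min a v) = a := by rw [min_eq_left hav, max_eq_right hua]
    rw [hclamp]
    linarith [mul_le_mul_of_nonneg_left (mul_card_add_mul_card_le_sum_abs_sub x hua v) hB]
  · have hclamp : max u (min a v) = v := by rw [min_eq_right hva, max_eq_right h.le]
    have hlower := mul_le_mul_of_nonneg_left
      (mul_card_le_add_mul_card_le_le_sum_abs_sub x h.le hva) hB
    have hcard := mul_le_mul_of_nonneg_left h.card_le_left_of_right (sub_nonneg.2 hva)
    rw [hclamp]
    linarith [sum_abs_sub_le_of_le x hva]

lemma sum_abs_sub_add_abs_sub_le (h : BalancedPair 1 B x u v) (a b : 𝕜) :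
    ∑ i, (|x i - u| + |x i - v|) ≤ B * ∑ i, (|x i - a| + |x i - b|) := by
  wlog hab : a ≤ b generalizing a b
  · simpa only [add_comm |_ - b|] using this b a (le_of_not_ge hab)
  set a' := max u (min a v)
  set b' := max u (min b v)
  have hab' : a' ≤ b' := max_le_max_left u (min_le_min_right v hab)
  have hua' : u ≤ a' := le_max_left _ _
  have hb'v : b' ≤ v := max_le h.le (min_le_right _ _)
  have hu : ∑ i, |x i - u| ≤ ∑ i, |x i - a'| + 2 * (B - 1) * ((a' - u) * #{i | x i ≤ u}) := by
    linarith [sum_abs_sub_le_of_le x hua',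
      mul_le_mul_of_nonneg_left h.card_le_left (sub_nonneg.2 hua')]
  have hv : ∑ i, |x i - v| ≤ ∑ i, |x i - b'| + 2 * (B - 1) * ((v - b') * #{i | v ≤ x i}) := by
    linarith [sum_abs_sub_le_of_ge x hb'v,
      mul_le_mul_of_nonneg_left h.card_le_right (sub_nonneg.2 hb'v)]
  have hmono (c : ℕ) : 0 ≤ (B - 1) * ((b' - a') * c) :=
    mul_nonneg (sub_nonneg.2 h.one_le) (mul_nonneg (sub_nonneg.2 hab') c.cast_nonneg)
  simp only [sum_add_distrib]
  linarith [h.sum_abs_sub_clamp_le a, h.sum_abs_sub_clamp_le b,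
    hmono #{i | x i ≤ u}, hmono #{i | v ≤ x i}]

lemma sum_max_abs_sub_le (h : BalancedPair 0 B x u v) (a : 𝕜) :
    ∑ i, max |x i - u| |x i - v| ≤ B * ∑ i, |x i - a| := by
  set a' := max u (min a v)
  have hua' : u ≤ a' := le_max_left _ _
  have ha'v : a' ≤ v := max_le h.le (min_le_right _ _)
  linarith [sum_max_abs_sub_le_add x hua' ha'v, h.sum_abs_sub_clamp_le a,
    mul_le_mul_of_nonneg_left h.card_le_left (sub_nonneg.2 hua'),
    mul_le_mul_of_nonneg_left h.card_le_right (sub_nonneg.2 ha'v)]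

end BalancedPair

lemma sumCost_two (t : ℝ) (y : Fin 2 → ℝ) : sumCost 2 t y = |t - y 0| + |t - y 1| :=
  Fin.sum_univ_two _

lemma abs_sub_le_maxCost {k : ℕ} (t : ℝ) (y : Fin k → ℝ) (ℓ : Fin k) :
    |t - y ℓ| ≤ maxCost k t y :=
  le_ciSup (f := fun ℓ => |t - y ℓ|) (Set.finite_range _).bddAbove ℓ

lemma maxCost_two (t : ℝ) (y : Fin 2 → ℝ) : maxCost 2 t y = max |t - y 0| |t - y 1| :=
  le_antisymm (ciSup_le <| Fin.forall_fin_two.2 ⟨le_max_left _ _, le_max_right _ _⟩)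
    (max_le (abs_sub_le_maxCost t y 0) (abs_sub_le_maxCost t y 1))

section Groups

variable {k m g : ℕ} {S : FLSetting k m} {x : Fin S.n → ℝ}

lemma FLSetting.numGroups_pos (S : FLSetting k m) : 0 < m :=
  Fin.pos (S.grp ⟨0, zero_lt_two.trans_le S.hn⟩)

lemma card_groupMS (S : FLSetting k m) (x : Fin S.n → ℝ) (j : Fin m) :
    (groupMS S x j).card = groupSize S j :=
  Multiset.card_map _ _

lemma card_repsMS (M : TwoPhase k) (S : FLSetting k m) (x : Fin S.n → ℝ) :
    (repsMS M S x).card = m := by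
  simp [repsMS]

lemma exists_groupSize_eq (h : ∀ j, groupSize S j * m = S.n) :
    ∃ g, ∀ j, groupSize S j = g :=
  ⟨S.n / m, fun j => (Nat.div_eq_of_eq_mul_left S.numGroups_pos (h j).symm).symm⟩

lemma n_eq_mul_of_groupSize_eq (h : ∀ j, groupSize S j = g) : S.n = m * g := by
  calc S.n = #(univ : Finset (Fin S.n)) := (card_fin _).symm
    _ = ∑ j, groupSize S j := card_eq_sum_card_fiberwise fun _ _ => mem_coe.2 (mem_univ _)
    _ = m * g := by simp [h]

lemma pos_of_groupSize_eq (h : ∀ j, groupSize S j = g) : 0 < g :=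
  Nat.pos_of_mul_pos_left (n_eq_mul_of_groupSize_eq h ▸ zero_lt_two.trans_le S.hn)

lemma SC_eq_of_groupSize_eq (h : ∀ j, groupSize S j = g) (cost : ℝ → (Fin k → ℝ) → ℝ)
    (y : Fin k → ℝ) : SC cost S x y = 1 / m * (1 / g) * ∑ i, cost (x i) y := by
  simp only [SC, h]
  rw [← mul_sum, sum_fiberwise, mul_assoc]

lemma SC_le_mul_SC_of_sum_le (h : ∀ j, groupSize S j = g) {cost : ℝ → (Fin k → ℝ) → ℝ}
    {y z : Fin k → ℝ} {B : ℝ} (hyz : ∑ i, cost (x i) y ≤ B * ∑ i, cost (x i) z) :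
    SC cost S x y ≤ B * SC cost S x z := by
  rw [SC_eq_of_groupSize_eq h, SC_eq_of_groupSize_eq h, mul_left_comm]
  gcongr

lemma mul_le_card_filter_of_le_countP (M : TwoPhase k) {p : ℝ → Prop} [DecidablePred p] {c d : ℕ}
    (hc : c ≤ (repsMS M S x).countP p)
    (hd : ∀ j, p (M.rep m (groupMS S x j)) → d ≤ (groupMS S x j).countP p) :
    c * d ≤ #{i | p (x i)} := by
  set J : Finset (Fin m) := {j | p (M.rep m (groupMS S x j))}
  have hJ : c ≤ #J := by rwa [repsMS, Multiset.countP_map] at hc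
  calc c * d ≤ #J * d := Nat.mul_le_mul_right d hJ
    _ = d * #J := mul_comm _ _
    _ ≤ #{i | p (x i) ∧ S.grp i ∈ J} := by
      refine mul_card_image_le_card_of_maps_to (f := S.grp) (by simp) d fun j hj => ?_
      have hdj := hd j (mem_filter.1 hj).2
      rw [groupMS, Multiset.countP_map, ← filter_val, card_val, filter_filter] at hdj
      refine hdj.trans (card_le_card fun i hi => ?_)
      simp_all
    _ ≤ #{i | p (x i)} := card_le_card fun i hi => by simp_all

end Groups

lemma ceil_mul_natCast_le {a : ℝ} (ha : a ≤ 1) (k : ℕ) : ⌈a * k⌉₊ ≤ k :=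
  Nat.ceil_le.2 (mul_le_of_le_one_left k.cast_nonneg ha)

lemma mul_add_sub_mul_sub_le {𝕜 : Type*} [CommRing 𝕜] [LinearOrder 𝕜] [IsStrictOrderedRing 𝕜]
    {M G L R T : 𝕜} (hL : 0 ≤ L) (hLR : L + 1 ≤ R) (hR : R ≤ M) (hT : 1 ≤ T) (hTG : T ≤ G) :
    L * T + (M + 1 - R) * (G + 1 - T) ≤ M * G := by
  calc L * T + (M + 1 - R) * (G + 1 - T) ≤ L * G + (M - L) * G :=
        add_le_add (mul_le_mul_of_nonneg_left hTG hL)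
          (mul_le_mul (by linarith) (by linarith) (by linarith) (by linarith))
    _ = M * G := by ring

lemma one_le_of_le_mul_of_le_mul {𝕜 : Type*} [CommRing 𝕜] [LinearOrder 𝕜] [IsStrictOrderedRing 𝕜]
    {N Y p q B : 𝕜} (hN : 0 < N) (hY : 0 ≤ Y) (hY₁ : Y ≤ 1) (hp₀ : 0 ≤ p) (hpq : p + q ≤ N)
    (hp : N ≤ (1 + Y) * B * p) (hq : N ≤ (1 + Y) * B * q) :
    1 ≤ B := by
  have hpos : 0 < (1 + Y) * B := pos_of_mul_pos_left (hN.trans_le hp) hp₀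
  have hB : 0 < B := pos_of_mul_pos_right hpos (by linarith)
  have hsum : 2 * N ≤ (1 + Y) * B * N := by
    linarith [mul_le_mul_of_nonneg_left hpq hpos.le]
  have htwo : 2 ≤ (1 + Y) * B := le_of_mul_le_mul_right hsum hN
  linarith [mul_le_mul_of_nonneg_right hY₁ hB.le]

section ApproxBound

variable {n m g : ℕ} {θ l r Y : ℝ}

lemma approxBound_le_iff (hm : 0 < m) (hn : n = m * g) {B : ℝ} :
    approxBound n m θ l r Y ≤ B ↔
      (n / ((m + 1 - ⌈l * m⌉₊) * (g + 1 - ⌈θ * g⌉₊)) ≤ B + 1 ∧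
        n / ((1 + Y) * ((m + 1 - ⌈r * m⌉₊) * (g + 1 - ⌈θ * g⌉₊))) ≤ B) ∧
      n / (⌈r * m⌉₊ * ⌈θ * g⌉₊) ≤ B + 1 ∧ n / ((1 + Y) * (⌈l * m⌉₊ * ⌈θ * g⌉₊)) ≤ B := by
  have hdiv : (n : ℝ) / m = g := by
    rw [hn, Nat.cast_mul, mul_div_cancel_left₀ _ (Nat.cast_ne_zero.2 hm.ne')]
  simp only [approxBound, hdiv, max_le_iff, sub_le_iff_le_add, mul_assoc]

lemma le_approxBound_mul (hn : n = m * g) (hY : 0 ≤ Y) (hT₀ : 0 < ⌈θ * g⌉₊)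
    (hTg : ⌈θ * g⌉₊ ≤ g) (hL₀ : 0 < ⌈l * m⌉₊) (hlr : ⌈l * m⌉₊ < ⌈r * m⌉₊) (hRm : ⌈r * m⌉₊ ≤ m) :
    n ≤ (1 + Y) * approxBound n m θ l r Y * (⌈l * m⌉₊ * ⌈θ * g⌉₊) ∧
      n ≤ (1 + Y) * approxBound n m θ l r Y * ((m + 1 - ⌈r * m⌉₊) * (g + 1 - ⌈θ * g⌉₊)) ∧
      n ≤ (approxBound n m θ l r Y + 1) * (⌈r * m⌉₊ * ⌈θ * g⌉₊) ∧
      n ≤ (approxBound n m θ l r Y + 1) * ((m + 1 - ⌈l * m⌉₊) * (g + 1 - ⌈θ * g⌉₊)) := by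
  have hR₀ : 0 < ⌈r * m⌉₊ := hL₀.trans hlr
  obtain ⟨⟨hL', hR'⟩, hR, hL⟩ :=
    (approxBound_le_iff (hR₀.trans_le hRm) hn).1 (le_refl (approxBound n m θ l r Y))
  have hY' : 0 < 1 + Y := by linarith
  have hp₀ : 0 < (⌈l * m⌉₊ * ⌈θ * g⌉₊ : ℝ) := by positivity
  have hp₁ : 0 < (⌈r * m⌉₊ * ⌈θ * g⌉₊ : ℝ) := by positivity
  rify at hT₀ hTg hL₀ hlr hRm
  have hT' : 0 < (g + 1 - ⌈θ * g⌉₊ : ℝ) := by linarith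
  have hq₀ : 0 < (m + 1 - ⌈r * m⌉₊ : ℝ) * (g + 1 - ⌈θ * g⌉₊) := mul_pos (by linarith) hT'
  have hq₁ : 0 < (m + 1 - ⌈l * m⌉₊ : ℝ) * (g + 1 - ⌈θ * g⌉₊) := mul_pos (by linarith) hT'
  rw [div_le_iff₀ (by positivity)] at hL' hR' hR hL
  exact ⟨by linarith, by linarith, hR, hL'⟩

lemma one_le_approxBound (hn : n = m * g) (hY : 0 ≤ Y) (hY₁ : Y ≤ 1)
    (hT₀ : 0 < ⌈θ * g⌉₊) (hTg : ⌈θ * g⌉₊ ≤ g) (hL₀ : 0 < ⌈l * m⌉₊) (hlr : ⌈l * m⌉₊ < ⌈r * m⌉₊)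
    (hRm : ⌈r * m⌉₊ ≤ m) : 1 ≤ approxBound n m θ l r Y := by
  obtain ⟨hL, hR, -⟩ := le_approxBound_mul hn hY hT₀ hTg hL₀ hlr hRm
  have hn₀ : 0 < n :=
    hn ▸ Nat.mul_pos ((hL₀.trans hlr).trans_le hRm) (hT₀.trans_le hTg)
  have hpq : (⌈l * m⌉₊ : ℝ) * ⌈θ * g⌉₊ + (m + 1 - ⌈r * m⌉₊) * (g + 1 - ⌈θ * g⌉₊) ≤ n := by
    rw [hn, Nat.cast_mul]
    exact mul_add_sub_mul_sub_le (by positivity) (by exact_mod_cast hlr) (by exact_mod_cast hRm)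
      (by exact_mod_cast hT₀) (by exact_mod_cast hTg)
  exact one_le_of_le_mul_of_le_mul (Nat.cast_pos.2 hn₀) hY hY₁ (by positivity) hpq hL hR

end ApproxBound

section Mechanism

variable {m g : ℕ} {S : FLSetting 2 m} {θ : ℝ}

lemma mul_ceil_le_card_le_kthLeftmost_repsMS (hS : ∀ j, groupSize S j = g) (hθ : θ ≤ 1) (l r : ℝ)
    (x : Fin S.n → ℝ) {t : ℕ} (ht : t ≤ m) :
    (t : ℝ) * ⌈θ * g⌉₊ ≤ #{i | x i ≤ kthLeftmost (repsMS (Mmech θ l r) S x) t} := by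
  have hcard (j) : (groupMS S x j).card = g := (card_groupMS S x j).trans (hS j)
  exact_mod_cast mul_le_card_filter_of_le_countP (Mmech θ l r)
    (le_countP_le_of_kthLeftmost_le (ht.trans_eq (card_repsMS _ S x).symm) le_rfl) fun j hj =>
      le_countP_le_of_kthLeftmost_le (by rw [hcard]; exact ceil_mul_natCast_le hθ g)
        (by simpa only [Mmech, hcard] using hj)

lemma mul_sub_ceil_le_card_ge_kthLeftmost_repsMS (hS : ∀ j, groupSize S j = g)
    (hθ : θ ∈ Set.Ioc 0 1) (l r : ℝ) (x : Fin S.n → ℝ) {t : ℕ} (ht₀ : 0 < t) (ht : t ≤ m) :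
    ((m : ℝ) + 1 - t) * (g + 1 - ⌈θ * g⌉₊) ≤
      #{i | kthLeftmost (repsMS (Mmech θ l r) S x) t ≤ x i} := by
  have hcard (j) : (groupMS S x j).card = g := (card_groupMS S x j).trans (hS j)
  have hT₀ : 0 < ⌈θ * g⌉₊ := Nat.ceil_pos.2 (mul_pos hθ.1 (Nat.cast_pos.2 (pos_of_groupSize_eq hS)))
  have hT : ⌈θ * g⌉₊ ≤ g := ceil_mul_natCast_le hθ.2 g
  have hreps := le_countP_ge_of_le_kthLeftmost ht₀
    (ht.trans_eq (card_repsMS (Mmech θ l r) S x).symm) le_rfl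
  rw [card_repsMS] at hreps
  have hcount : (m + 1 - t) * (g + 1 - ⌈θ * g⌉₊) ≤
      #{i | kthLeftmost (repsMS (Mmech θ l r) S x) t ≤ x i} :=
    mul_le_card_filter_of_le_countP (Mmech θ l r) hreps fun j hj => by
      simpa only [hcard] using le_countP_ge_of_le_kthLeftmost hT₀ (hT.trans_eq (hcard j).symm)
        (by simpa only [Mmech, hcard] using hj)
  rify [ht.trans m.le_succ, hT.trans g.le_succ] at hcount
  exact hcount

lemma outcome_Mmech (θ l r : ℝ) (x : Fin S.n → ℝ) :
    outcome (Mmech θ l r) S x =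
      ![kthLeftmost (repsMS (Mmech θ l r) S x) ⌈l * m⌉₊,
        kthLeftmost (repsMS (Mmech θ l r) S x) ⌈r * m⌉₊] :=
  rfl

lemma balancedPair_outcome_Mmech {l r Y : ℝ} (hS : ∀ j, groupSize S j = g)
    (hθ : θ ∈ Set.Ioc 0 1) (hl : 0 < l) (hr : r ≤ 1) (hlr : ⌈l * m⌉₊ < ⌈r * m⌉₊)
    (hY : 0 ≤ Y) (hY₁ : Y ≤ 1) (x : Fin S.n → ℝ) :
    BalancedPair Y (approxBound S.n m θ l r Y) x
      (outcome (Mmech θ l r) S x 0) (outcome (Mmech θ l r) S x 1) := by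
  have hn : S.n = m * g := n_eq_mul_of_groupSize_eq hS
  have hL₀ : 0 < ⌈l * m⌉₊ := Nat.ceil_pos.2 (mul_pos hl (Nat.cast_pos.2 S.numGroups_pos))
  have hRm : ⌈r * m⌉₊ ≤ m := ceil_mul_natCast_le hr m
  have hT₀ : 0 < ⌈θ * g⌉₊ := Nat.ceil_pos.2 (mul_pos hθ.1 (Nat.cast_pos.2 (pos_of_groupSize_eq hS)))
  have hTg : ⌈θ * g⌉₊ ≤ g := ceil_mul_natCast_le hθ.2 g
  have hleft {t : ℕ} (ht : t ≤ m) := mul_ceil_le_card_le_kthLeftmost_repsMS hS hθ.2 l r x ht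
  have hright {t : ℕ} (ht₀ : 0 < t) (ht : t ≤ m) :=
    mul_sub_ceil_le_card_ge_kthLeftmost_repsMS hS hθ l r x ht₀ ht
  have hB := one_le_approxBound hn hY hY₁ hT₀ hTg hL₀ hlr hRm
  have hB₀ : 0 ≤ (1 + Y) * approxBound S.n m θ l r Y := mul_nonneg (by linarith) (by linarith)
  have hB₁ : 0 ≤ approxBound S.n m θ l r Y + 1 := by linarith
  obtain ⟨hL, hR', hR, hL'⟩ := le_approxBound_mul hn hY hT₀ hTg hL₀ hlr hRm
  rw [outcome_Mmech]
  refine ⟨kthLeftmost_le_kthLeftmost hlr.le hL₀ (hRm.trans_eq (card_repsMS _ S x).symm), hB, ?_, ?_,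
    ?_, ?_⟩ <;> rw [Fintype.card_fin]
  · exact hL.trans (mul_le_mul_of_nonneg_left (hleft (hlr.le.trans hRm)) hB₀)
  · exact hR'.trans (mul_le_mul_of_nonneg_left (hright (hL₀.trans hlr) hRm) hB₀)
  · exact hR.trans (mul_le_mul_of_nonneg_left (hleft hRm) hB₁)
  · exact hL'.trans (mul_le_mul_of_nonneg_left (hright hL₀ (hlr.le.trans hRm)) hB₁)

end Mechanism

theorem stmt2_general {m : ℕ} {θ l r : ℝ} (hθ : θ ∈ Set.Ioc (0 : ℝ) 1) (hl : 0 < l) (hr : r ≤ 1)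
    (hlr : ⌈l * (m : ℝ)⌉₊ < ⌈r * (m : ℝ)⌉₊) (S : FLSetting 2 m)
    (hsym : ∀ j, groupSize S j * m = S.n) (x : Fin S.n → ℝ) (y : Fin 2 → ℝ) :
    SC (sumCost 2) S x (outcome (Mmech θ l r) S x)
      ≤ approxBound S.n m θ l r 1 * SC (sumCost 2) S x y ∧
    SC (maxCost 2) S x (outcome (Mmech θ l r) S x)
      ≤ approxBound S.n m θ l r 0 * SC (maxCost 2) S x y := by
  obtain ⟨g, hS⟩ := exists_groupSize_eq hsym
  constructor <;> refine SC_le_mul_SC_of_sum_le hS ?_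
  · have hbal := balancedPair_outcome_Mmech hS hθ hl hr hlr zero_le_one le_rfl x
    simpa only [sumCost_two] using hbal.sum_abs_sub_add_abs_sub_le (y 0) (y 1)
  · have hbal := balancedPair_outcome_Mmech hS hθ hl hr hlr le_rfl zero_le_one x
    have hB : 0 ≤ approxBound S.n m θ l r 0 := zero_le_one.trans hbal.one_le
    simp only [maxCost_two]
    calc _ ≤ approxBound S.n m θ l r 0 * ∑ i, |x i - y 0| := hbal.sum_max_abs_sub_le (y 0)
      _ ≤ _ := by gcongr; exact le_max_left _ _

/-- On every instance with `m` groups of equal size `n/m`, the social cost of the output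
of `M_m(θ,ℓ,r)` is at most
`max{ n/((m+1−⌈ℓm⌉)(n/m+1−⌈θn/m⌉)) − 1, n/((1+Y)(m+1−⌈rm⌉)(n/m+1−⌈θn/m⌉)),
  n/(⌈rm⌉⌈θn/m⌉) − 1, n/((1+Y)⌈ℓm⌉⌈θn/m⌉) }` times the optimal social cost,
where `Y = 1` in the sum-variant and `Y = 0` in the max-variant. -/
theorem stmt2 (m : ℕ) (hm : 2 ≤ m) (θ l r : ℝ)
    (hθ : θ ∈ Set.Ioc (0 : ℝ) 1) (hl : l ∈ Set.Ioc (0 : ℝ) 1) (hr : r ∈ Set.Ioc (0 : ℝ) 1)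
    (hlr : ⌈l * (m : ℝ)⌉₊ < ⌈r * (m : ℝ)⌉₊)
    (S : FLSetting 2 m) (hsym : ∀ j : Fin m, groupSize S j * m = S.n)
    (x : Fin S.n → ℝ) (y : Fin 2 → ℝ) (hy : Feasible S x y) :
    SC (sumCost 2) S x (outcome (Mmech θ l r) S x)
      ≤ approxBound S.n m θ l r 1 * SC (sumCost 2) S x y ∧
    SC (maxCost 2) S x (outcome (Mmech θ l r) S x)
      ≤ approxBound S.n m θ l r 0 * SC (maxCost 2) S x y := by
  exact stmt2_general hθ hl.1 hr.2 hlr S hsym x y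

end
end

section
/- In the sum-variant with k = 2 facilities and m = 3 groups, the mechanism M_3(1/3, 2/3, 1) has approximation ratio at most 9/4: on every instance with 3 groups its output has social cost at most 9/4 times the minimum social cost over all feasible solutions. -/
open Finset

noncomputable section

/-!
Replacing a solution by the best of its facilities, opened `k` times, does not increase the social
cost, so it suffices to compare the outcome `(b, c)` with a pair `(p, p)`. As a function of the
agent's position, the difference between the cost for `(b, c)` and `ρ` times the cost for `(p, p)`
increases up to `p` and decreases after it. The representative of a group is its `θ`-quantile, so
this difference is at most its value at the representative on a fraction `θ` of the group (when the
representative is left of `p`) or `1 - θ` (when it is right of `p`), and at most its value at `p`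
on the rest. Adding these bounds over three groups whose representatives satisfy `a ≤ b ≤ c` gives
a nonpositive total as soon as `3 ≤ 2 (1 - θ) ρ`, `3 ≤ 4 θ ρ` and `1 - θ ≤ θ ρ`; the first two
balance at `θ = 1 / 3`, with `ρ = 9 / 4`.
-/

section Mean

variable {α : Type*} {M : Multiset α} {f : α → ℝ}

/-- The average of `f` over the elements of a multiset, the cost that a group contributes to the
social cost; it is `0` for the empty multiset. -/
def mean (M : Multiset α) (f : α → ℝ) : ℝ := (M.map f).sum / Multiset.card M

lemma mean_sub (M : Multiset α) (f g : α → ℝ) :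
    mean M (fun z => f z - g z) = mean M f - mean M g := by
  rw [mean, Multiset.sum_map_sub, sub_div, mean, mean]

lemma mean_const_mul (M : Multiset α) (c : ℝ) (f : α → ℝ) :
    mean M (fun z => c * f z) = c * mean M f := by
  rw [mean, Multiset.sum_map_mul_left, mul_div_assoc, mean]

lemma mean_sum {ι : Type*} (M : Multiset α) (s : Finset ι) (f : ι → α → ℝ) :
    mean M (fun z => ∑ l ∈ s, f l z) = ∑ l ∈ s, mean M (f l) := by
  simp only [mean, ← sum_div]
  rw [Multiset.sum_map_sum]

lemma sum_map_le_card_mul {H : ℝ} (hH : ∀ z ∈ M, f z ≤ H) :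
    (M.map f).sum ≤ Multiset.card M * H := by
  simpa only [Multiset.card_map, nsmul_eq_mul] using
    Multiset.sum_le_card_nsmul (M.map f) H (by simpa only [Multiset.forall_mem_map_iff] using hH)

lemma mean_le_of_forall_le (hM : M ≠ 0) {H : ℝ} (hH : ∀ z ∈ M, f z ≤ H) : mean M f ≤ H := by
  have hcard : (0 : ℝ) < Multiset.card M := by exact_mod_cast Multiset.card_pos.2 hM
  exact (div_le_iff₀' hcard).2 (sum_map_le_card_mul hH)

lemma mean_le_of_le_card_filter (hM : M ≠ 0) {P : α → Prop} [DecidablePred P] {γ L H : ℝ}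
    (hγ : γ * Multiset.card M ≤ Multiset.card (M.filter P)) (hLH : L ≤ H)
    (hL : ∀ z ∈ M, P z → f z ≤ L) (hH : ∀ z ∈ M, f z ≤ H) :
    mean M f ≤ γ * L + (1 - γ) * H := by
  have hcard : (0 : ℝ) < Multiset.card M := by exact_mod_cast Multiset.card_pos.2 hM
  have hsum_pos : ((M.filter P).map f).sum ≤ Multiset.card (M.filter P) * L :=
    sum_map_le_card_mul fun z hz => hL z (Multiset.mem_of_mem_filter hz) (Multiset.of_mem_filter hz)
  have hsum_neg : ((M.filter (¬P ·)).map f).sum ≤ Multiset.card (M.filter (¬P ·)) * H :=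
    sum_map_le_card_mul fun z hz => hH z (Multiset.mem_of_mem_filter hz)
  have hsplit : (M.map f).sum = ((M.filter P).map f).sum + ((M.filter (¬P ·)).map f).sum := by
    rw [← Multiset.sum_add, ← Multiset.map_add, Multiset.filter_add_not]
  have hcard_split : (Multiset.card M : ℝ) =
      Multiset.card (M.filter P) + Multiset.card (M.filter (¬P ·)) := by
    rw [← Nat.cast_add, ← Multiset.card_add, Multiset.filter_add_not]
  have hgain := mul_le_mul_of_nonneg_right hγ (sub_nonneg.2 hLH)
  rw [mean, div_le_iff₀ hcard]
  rw [hcard_split] at hgain ⊢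
  linarith

end Mean

section KthLeftmost

lemma le_card_filter_le_kthLeftmost {M : Multiset ℝ} {t : ℕ} (ht : t ≤ Multiset.card M) :
    t ≤ Multiset.card (M.filter (· ≤ kthLeftmost M t)) := by
  have hlen : (M.sort (· ≤ ·)).length = Multiset.card M := Multiset.length_sort ..
  have hsub : ((M.sort (· ≤ ·)).take t : Multiset ℝ) ≤ M.filter (· ≤ kthLeftmost M t) := by
    refine Multiset.le_filter.2 ⟨?_, fun a ha => ?_⟩
    · conv_rhs => rw [← Multiset.sort_eq M (· ≤ ·)]
      exact (List.take_sublist _ _).subperm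
    · obtain ⟨i, hi, rfl⟩ := List.mem_iff_getElem.1 (Multiset.mem_coe.1 ha)
      rw [List.length_take] at hi
      rw [kthLeftmost, List.getD_eq_getElem _ _ (by omega), List.getElem_take]
      exact (Multiset.pairwise_sort M (· ≤ ·)).sortedLE.getElem_le_getElem_of_le (by omega)
  simpa [hlen, ht] using Multiset.card_le_card hsub

lemma card_sub_le_card_filter_kthLeftmost_le (M : Multiset ℝ) (t : ℕ) :
    Multiset.card M - (t - 1) ≤ Multiset.card (M.filter (kthLeftmost M t ≤ ·)) := by
  have hsub : ((M.sort (· ≤ ·)).drop (t - 1) : Multiset ℝ) ≤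
      M.filter (kthLeftmost M t ≤ ·) := by
    refine Multiset.le_filter.2 ⟨?_, fun a ha => ?_⟩
    · conv_rhs => rw [← Multiset.sort_eq M (· ≤ ·)]
      exact (List.drop_sublist _ _).subperm
    · obtain ⟨i, hi, rfl⟩ := List.mem_iff_getElem.1 (Multiset.mem_coe.1 ha)
      rw [List.length_drop] at hi
      rw [kthLeftmost, List.getD_eq_getElem _ _ (by omega), List.getElem_drop]
      exact (Multiset.pairwise_sort M (· ≤ ·)).sortedLE.getElem_le_getElem_of_le (by omega)
  simpa using Multiset.card_le_card hsub

lemma sort_map_univ_eq_ofFn {m : ℕ} (f : Fin m → ℝ) :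
    (univ.val.map f).sort (· ≤ ·) = List.ofFn (f ∘ Tuple.sort f) := by
  refine List.Perm.eq_of_pairwise' (r := (· ≤ ·)) (Multiset.pairwise_sort ..)
    (Tuple.monotone_sort f).sortedLE_ofFn.pairwise ?_
  rw [← Multiset.coe_eq_coe, Multiset.sort_eq, Fin.univ_val_map, Multiset.coe_eq_coe]
  exact ((Tuple.sort f).ofFn_comp_perm f).symm

lemma kthLeftmost_map_univ {m : ℕ} (f : Fin m → ℝ) (i : Fin m) :
    kthLeftmost (univ.val.map f) (i + 1) = f (Tuple.sort f i) := by
  rw [kthLeftmost, sort_map_univ_eq_ofFn, Nat.add_sub_cancel,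
    List.getD_eq_getElem _ _ (by rw [List.length_ofFn]; exact i.isLt), List.getElem_ofFn]
  rfl

end KthLeftmost

section Quantile

variable {M : Multiset ℝ} {θ : ℝ}

/-- The `⌈θ·|M|⌉`-th leftmost element of `M`: the rule by which `Mmech θ l r` picks the
representative of a group. -/
def quantile (θ : ℝ) (M : Multiset ℝ) : ℝ := kthLeftmost M ⌈θ * (Multiset.card M : ℝ)⌉₊

lemma mul_card_le_card_filter_le_quantile (hθ : θ ≤ 1) :
    θ * Multiset.card M ≤ Multiset.card (M.filter (· ≤ quantile θ M)) := by
  refine Nat.ceil_le.1 (le_card_filter_le_kthLeftmost (Nat.ceil_le.2 ?_))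
  exact mul_le_of_le_one_left (Nat.cast_nonneg _) hθ

lemma one_sub_mul_card_le_card_filter_quantile_le (hθ : 0 ≤ θ) :
    (1 - θ) * Multiset.card M ≤ Multiset.card (M.filter (quantile θ M ≤ ·)) := by
  set t := ⌈θ * (Multiset.card M : ℝ)⌉₊
  have hrank : ((t - 1 : ℕ) : ℝ) ≤ θ * Multiset.card M := by
    have hlt : (t : ℝ) < θ * Multiset.card M + 1 := Nat.ceil_lt_add_one (by positivity)
    rcases Nat.eq_zero_or_pos t with h | h
    · rw [h, Nat.zero_sub, Nat.cast_zero]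
      positivity
    · rw [Nat.cast_pred h]
      linarith
  have hcount : (Multiset.card M : ℝ) ≤
      Multiset.card (M.filter (quantile θ M ≤ ·)) + (t - 1 : ℕ) := by
    exact_mod_cast Nat.sub_le_iff_le_add.1 (card_sub_le_card_filter_kthLeftmost_le M t)
  linarith

variable {f : ℝ → ℝ} {p q : ℝ}

lemma le_apply_of_monotoneOn_of_antitoneOn (hmono : MonotoneOn f (Set.Iic p))
    (hanti : AntitoneOn f (Set.Ici p)) (z : ℝ) : f z ≤ f p :=
  (le_total z p).elim (fun h => hmono h Set.self_mem_Iic h) fun h => hanti Set.self_mem_Ici h h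

lemma mean_le_of_quantile_le (hθ : θ ≤ 1) (hM : M ≠ 0) (hmono : MonotoneOn f (Set.Iic p))
    (hanti : AntitoneOn f (Set.Ici p)) (hMq : quantile θ M ≤ q) (hqp : q ≤ p) :
    mean M f ≤ θ * f q + (1 - θ) * f p := by
  have hmax := le_apply_of_monotoneOn_of_antitoneOn hmono hanti
  refine mean_le_of_le_card_filter hM (mul_card_le_card_filter_le_quantile hθ) (hmax q)
    (fun z _ hz => ?_) fun z _ => hmax z
  have hzq : z ≤ q := hz.trans hMq
  exact hmono (hzq.trans hqp) hqp hzq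

lemma mean_le_of_le_quantile (hθ : 0 ≤ θ) (hM : M ≠ 0) (hmono : MonotoneOn f (Set.Iic p))
    (hanti : AntitoneOn f (Set.Ici p)) (hpq : p ≤ q) (hqM : q ≤ quantile θ M) :
    mean M f ≤ (1 - θ) * f q + θ * f p := by
  have hmax := le_apply_of_monotoneOn_of_antitoneOn hmono hanti
  have hmean := mean_le_of_le_card_filter (f := f) hM
    (one_sub_mul_card_le_card_filter_quantile_le hθ) (hmax q)
    (fun z _ hz => hanti hpq (hpq.trans (hqM.trans hz)) (hqM.trans hz)) fun z _ => hmax z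
  rwa [sub_sub_cancel] at hmean

end Quantile

section Excess

lemma sumCost_const (k : ℕ) (z p : ℝ) : sumCost k z (fun _ => p) = k * |z - p| := by
  simp [sumCost]

lemma sumCost_le_sumCost_add {k : ℕ} (y : Fin k → ℝ) (z w : ℝ) :
    sumCost k z y ≤ sumCost k w y + k * |z - w| := by
  calc sumCost k z y ≤ ∑ l, (|w - y l| + |z - w|) :=
        sum_le_sum fun l _ => by linarith [abs_sub_le z w (y l)]
    _ = sumCost k w y + k * |z - w| := by simp [sumCost, sum_add_distrib]

/-- The amount by which the cost of an agent at `z` for the solution `y` exceeds `ρ` times its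
cost for `k` facilities at `p`. -/
def excess {k : ℕ} (ρ : ℝ) (y : Fin k → ℝ) (p z : ℝ) : ℝ :=
  sumCost k z y - ρ * sumCost k z fun _ => p

variable {k : ℕ} {ρ : ℝ} (y : Fin k → ℝ) (p : ℝ)

lemma excess_le_excess_of_abs_sub_eq_add (hρ : 1 ≤ ρ) {z w : ℝ}
    (hzw : |z - p| = |z - w| + |w - p|) :
    excess ρ y p z ≤ excess ρ y p w := by
  have hlip := sumCost_le_sumCost_add y z w
  have hdist : (k : ℝ) * |z - w| ≤ ρ * (k * |z - w|) := le_mul_of_one_le_left (by positivity) hρ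
  simp only [excess, sumCost_const, hzw]
  linarith

lemma monotoneOn_excess (hρ : 1 ≤ ρ) : MonotoneOn (excess ρ y p) (Set.Iic p) := by
  intro z (hz : z ≤ p) w (hw : w ≤ p) hzw
  apply excess_le_excess_of_abs_sub_eq_add y p hρ
  rw [abs_of_nonpos, abs_of_nonpos, abs_of_nonpos] <;> linarith

lemma antitoneOn_excess (hρ : 1 ≤ ρ) : AntitoneOn (excess ρ y p) (Set.Ici p) := by
  intro w (hw : p ≤ w) z (hz : p ≤ z) hwz
  apply excess_le_excess_of_abs_sub_eq_add y p hρ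
  rw [abs_of_nonneg, abs_of_nonneg, abs_of_nonneg] <;> linarith

end Excess

section ThreeGroups

variable {A B C : Multiset ℝ} {θ ρ b c p : ℝ}

lemma excess_pair (z : ℝ) : excess ρ ![b, c] p z = |z - b| + |z - c| - 2 * ρ * |z - p| := by
  simp only [excess, sumCost_const]
  simp only [sumCost, Fin.sum_univ_two, Matrix.cons_val_zero, Matrix.cons_val_one]
  push_cast
  ring

lemma sum_mean_excess_nonpos_of_le_left (hθ₀ : 0 ≤ θ) (hθ₁ : θ ≤ 1) (hρ : 1 ≤ ρ)
    (hθρ : 3 ≤ 2 * (1 - θ) * ρ) (hA : A ≠ 0) (hB : B ≠ 0) (hC : C ≠ 0)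
    (hBb : b ≤ quantile θ B) (hCc : c ≤ quantile θ C) (hbc : b ≤ c) (hpb : p ≤ b) :
    mean A (excess ρ ![b, c] p) + mean B (excess ρ ![b, c] p) + mean C (excess ρ ![b, c] p)
      ≤ 0 := by
  have hmono := monotoneOn_excess ![b, c] p hρ
  have hanti := antitoneOn_excess ![b, c] p hρ
  have hmeanA := mean_le_of_forall_le hA fun z _ =>
    le_apply_of_monotoneOn_of_antitoneOn hmono hanti z
  have hmeanB := mean_le_of_le_quantile hθ₀ hB hmono hanti hpb hBb
  have hmeanC := mean_le_of_le_quantile hθ₀ hC hmono hanti (hpb.trans hbc) hCc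
  have hatp : excess ρ ![b, c] p p = b + c - 2 * p := by
    rw [excess_pair, sub_self, abs_zero, abs_of_nonpos, abs_of_nonpos] <;> linarith
  have hatb : excess ρ ![b, c] p b = c - b - 2 * ρ * (b - p) := by
    rw [excess_pair, sub_self, abs_zero, abs_of_nonpos, abs_of_nonneg] <;> linarith
  have hatc : excess ρ ![b, c] p c = c - b - 2 * ρ * (c - p) := by
    rw [excess_pair, sub_self, abs_zero, abs_of_nonneg, abs_of_nonneg] <;> linarith
  rw [hatp] at hmeanA
  rw [hatb, hatp] at hmeanB
  rw [hatc, hatp] at hmeanC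
  have hgain := mul_le_mul_of_nonneg_right hθρ (by linarith : 0 ≤ b + c - 2 * p)
  have hslack := mul_nonneg (sub_nonneg.2 hθ₁) (sub_nonneg.2 hpb)
  linarith

lemma sum_mean_excess_nonpos_of_mem_Icc (hθ₀ : 0 ≤ θ) (hθ₁ : θ ≤ 1) (hρ : 1 ≤ ρ)
    (hθρ : 3 ≤ 2 * (1 - θ) * ρ) (hθρ' : 3 ≤ 4 * θ * ρ) (hA : A ≠ 0) (hB : B ≠ 0) (hC : C ≠ 0)
    (hAb : quantile θ A ≤ b) (hBb : quantile θ B ≤ b) (hCc : c ≤ quantile θ C)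
    (hp : p ∈ Set.Icc b c) :
    mean A (excess ρ ![b, c] p) + mean B (excess ρ ![b, c] p) + mean C (excess ρ ![b, c] p)
      ≤ 0 := by
  obtain ⟨hbp, hpc⟩ := hp
  have hmono := monotoneOn_excess ![b, c] p hρ
  have hanti := antitoneOn_excess ![b, c] p hρ
  have hmeanA := mean_le_of_quantile_le hθ₁ hA hmono hanti hAb hbp
  have hmeanB := mean_le_of_quantile_le hθ₁ hB hmono hanti hBb hbp
  have hmeanC := mean_le_of_le_quantile hθ₀ hC hmono hanti hpc hCc
  have hatp : excess ρ ![b, c] p p = c - b := by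
    rw [excess_pair, sub_self, abs_zero, abs_of_nonneg, abs_of_nonpos] <;> linarith
  have hatb : excess ρ ![b, c] p b = c - b - 2 * ρ * (p - b) := by
    rw [excess_pair, sub_self, abs_zero, abs_of_nonpos, abs_of_nonpos] <;> linarith
  have hatc : excess ρ ![b, c] p c = c - b - 2 * ρ * (c - p) := by
    rw [excess_pair, sub_self, abs_zero, abs_of_nonneg, abs_of_nonneg] <;> linarith
  rw [hatb, hatp] at hmeanA hmeanB
  rw [hatc, hatp] at hmeanC
  have hgain_left := mul_le_mul_of_nonneg_right hθρ' (sub_nonneg.2 hbp)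
  have hgain_right := mul_le_mul_of_nonneg_right hθρ (sub_nonneg.2 hpc)
  linarith

lemma sum_mean_excess_nonpos_of_right_le (hθ₁ : θ ≤ 1) (hρ : 1 ≤ ρ) (hθρ : 3 ≤ 4 * θ * ρ)
    (hθρ' : 1 - θ ≤ θ * ρ) (hA : A ≠ 0) (hB : B ≠ 0) (hC : C ≠ 0)
    (hAb : quantile θ A ≤ b) (hBb : quantile θ B ≤ b) (hCc : quantile θ C ≤ c) (hbc : b ≤ c)
    (hcp : c ≤ p) :
    mean A (excess ρ ![b, c] p) + mean B (excess ρ ![b, c] p) + mean C (excess ρ ![b, c] p)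
      ≤ 0 := by
  have hbp := hbc.trans hcp
  have hmono := monotoneOn_excess ![b, c] p hρ
  have hanti := antitoneOn_excess ![b, c] p hρ
  have hmeanA := mean_le_of_quantile_le hθ₁ hA hmono hanti hAb hbp
  have hmeanB := mean_le_of_quantile_le hθ₁ hB hmono hanti hBb hbp
  have hmeanC := mean_le_of_quantile_le hθ₁ hC hmono hanti hCc hcp
  have hatp : excess ρ ![b, c] p p = 2 * p - b - c := by
    rw [excess_pair, sub_self, abs_zero, abs_of_nonneg, abs_of_nonneg] <;> linarith
  have hatb : excess ρ ![b, c] p b = c - b - 2 * ρ * (p - b) := by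
    rw [excess_pair, sub_self, abs_zero, abs_of_nonpos, abs_of_nonpos] <;> linarith
  have hatc : excess ρ ![b, c] p c = c - b - 2 * ρ * (p - c) := by
    rw [excess_pair, sub_self, abs_zero, abs_of_nonneg, abs_of_nonpos] <;> linarith
  rw [hatb, hatp] at hmeanA hmeanB
  rw [hatc, hatp] at hmeanC
  have hgain_gap := mul_le_mul_of_nonneg_right hθρ (sub_nonneg.2 hbc)
  have hgain_far := mul_le_mul_of_nonneg_right hθρ' (sub_nonneg.2 hcp)
  linarith

lemma sum_mean_excess_nonpos (hθ₀ : 0 < θ) (hθ₁ : θ < 1) (hρ₁ : 3 / (2 * (1 - θ)) ≤ ρ)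
    (hρ₂ : 3 / (4 * θ) ≤ ρ) (hρ₃ : (1 - θ) / θ ≤ ρ) (hA : A ≠ 0) (hB : B ≠ 0) (hC : C ≠ 0)
    (hAB : quantile θ A ≤ quantile θ B) (hBC : quantile θ B ≤ quantile θ C) (p : ℝ) :
    mean A (excess ρ ![quantile θ B, quantile θ C] p) +
      mean B (excess ρ ![quantile θ B, quantile θ C] p) +
      mean C (excess ρ ![quantile θ B, quantile θ C] p) ≤ 0 := by
  have hpos : 0 < 1 - θ := sub_pos.2 hθ₁
  rw [div_le_iff₀' (by positivity)] at hρ₁ hρ₂ hρ₃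
  have hρ : 1 ≤ ρ := by nlinarith
  rcases le_total p (quantile θ B) with hpb | hbp
  · exact sum_mean_excess_nonpos_of_le_left hθ₀.le hθ₁.le hρ hρ₁ hA hB hC le_rfl le_rfl hBC hpb
  rcases le_total p (quantile θ C) with hpc | hcp
  · exact sum_mean_excess_nonpos_of_mem_Icc hθ₀.le hθ₁.le hρ hρ₁ hρ₂ hA hB hC hAB le_rfl le_rfl
      ⟨hbp, hpc⟩
  · exact sum_mean_excess_nonpos_of_right_le hθ₁.le hρ hρ₂ hρ₃ hA hB hC hAB le_rfl le_rfl hBC hcp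

end ThreeGroups

section SocialCost

variable {k m : ℕ} (S : FLSetting k m) (x : Fin S.n → ℝ)

lemma groupMS_ne_zero (j : Fin m) : groupMS S x j ≠ 0 := by
  obtain ⟨i, hi⟩ := S.surj j
  have hxi : x i ∈ groupMS S x j :=
    Multiset.mem_map_of_mem x (mem_filter.2 ⟨mem_univ i, hi⟩ : i ∈ univ.filter (S.grp · = j))
  exact fun h => Multiset.notMem_zero _ (h ▸ hxi)

lemma SC_eq_sum_mean (cost : ℝ → (Fin k → ℝ) → ℝ) (y : Fin k → ℝ) :
    SC cost S x y = (1 / (m : ℝ)) * ∑ j, mean (groupMS S x j) (cost · y) := by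
  simp only [SC, mean, groupMS, groupSize, Multiset.map_map, Multiset.card_map,
    div_eq_inv_mul, mul_one]
  rfl

lemma mul_SC_sumCost_eq_sum_SC_const (y : Fin k → ℝ) :
    k * SC (sumCost k) S x y = ∑ l, SC (sumCost k) S x (fun _ => y l) := by
  simp only [SC_eq_sum_mean, sumCost_const, mean_const_mul, ← mul_sum]
  simp only [sumCost, mean_sum]
  rw [sum_comm, mul_left_comm]

lemma exists_SC_const_le [NeZero k] (y : Fin k → ℝ) :
    ∃ l, SC (sumCost k) S x (fun _ => y l) ≤ SC (sumCost k) S x y := by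
  obtain ⟨l, -, hl⟩ := exists_le_of_sum_le (s := univ) univ_nonempty
    (f := fun l => SC (sumCost k) S x (fun _ => y l)) (g := fun _ => SC (sumCost k) S x y)
    (by simp [← mul_SC_sumCost_eq_sum_SC_const])
  exact ⟨l, hl⟩

lemma SC_le_mul_SC_of_forall_excess_nonpos [NeZero k] {ρ : ℝ} (hρ : 0 ≤ ρ) {y : Fin k → ℝ}
    (h : ∀ p, ∑ j, mean (groupMS S x j) (excess ρ y p) ≤ 0) (y' : Fin k → ℝ) :
    SC (sumCost k) S x y ≤ ρ * SC (sumCost k) S x y' := by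
  obtain ⟨l, hl⟩ := exists_SC_const_le S x y'
  refine le_trans ?_ (mul_le_mul_of_nonneg_left hl hρ)
  have hsum := h (y' l)
  unfold excess at hsum
  simp only [mean_sub, mean_const_mul, sum_sub_distrib, ← mul_sum, sub_nonpos] at hsum
  rw [SC_eq_sum_mean, SC_eq_sum_mean, mul_left_comm]
  exact mul_le_mul_of_nonneg_left hsum (by positivity)

end SocialCost

lemma outcome_Mmech_three (S : FLSetting 2 3) (x : Fin S.n → ℝ) (θ : ℝ) :
    let rep := fun j => quantile θ (groupMS S x j)
    outcome (Mmech θ (2 / 3) 1) S x = ![rep (Tuple.sort rep 1), rep (Tuple.sort rep 2)] := by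
  intro rep
  have htwo : ⌈(2 / 3 : ℝ) * (3 : ℕ)⌉₊ = (1 : Fin 3) + 1 := by
    rw [show (2 / 3 : ℝ) * (3 : ℕ) = (2 : ℕ) by norm_num, Nat.ceil_natCast]
    rfl
  have hthree : ⌈(1 : ℝ) * (3 : ℕ)⌉₊ = (2 : Fin 3) + 1 := by
    rw [one_mul, Nat.ceil_natCast]
    rfl
  have hreps : repsMS (Mmech θ (2 / 3) 1) S x = univ.val.map rep := rfl
  rw [outcome, hreps]
  simp only [Mmech, htwo, hthree, kthLeftmost_map_univ]

theorem stmt5_general (S : FLSetting 2 3) (x : Fin S.n → ℝ) (y : Fin 2 → ℝ) {θ ρ : ℝ}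
    (hθ₀ : 0 < θ) (hθ₁ : θ < 1) (hρ₁ : 3 / (2 * (1 - θ)) ≤ ρ) (hρ₂ : 3 / (4 * θ) ≤ ρ)
    (hρ₃ : (1 - θ) / θ ≤ ρ) :
    SC (sumCost 2) S x (outcome (Mmech θ (2 / 3) 1) S x) ≤ ρ * SC (sumCost 2) S x y := by
  rw [outcome_Mmech_three]
  set rep := fun j => quantile θ (groupMS S x j)
  have hmono : Monotone (rep ∘ Tuple.sort rep) := Tuple.monotone_sort rep
  have hρ : 0 ≤ ρ := le_trans (by positivity) hρ₂
  refine SC_le_mul_SC_of_forall_excess_nonpos S x hρ (fun p => ?_) y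
  rw [← Equiv.sum_comp (Tuple.sort rep), Fin.sum_univ_three]
  exact sum_mean_excess_nonpos hθ₀ hθ₁ hρ₁ hρ₂ hρ₃ (groupMS_ne_zero S x _)
    (groupMS_ne_zero S x _) (groupMS_ne_zero S x _) (hmono (by decide : (0 : Fin 3) ≤ 1))
    (hmono (by decide : (1 : Fin 3) ≤ 2)) p

/-- In the sum-variant with two facilities and `m = 3` groups, the mechanism
`M_3(1/3, 2/3, 1)` has approximation ratio at most `9/4`. -/
theorem stmt5 (S : FLSetting 2 3) (x : Fin S.n → ℝ) (y : Fin 2 → ℝ) (hy : Feasible S x y) :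
    SC (sumCost 2) S x (outcome (Mmech (1 / 3) (2 / 3) 1) S x)
      ≤ (9 / 4) * SC (sumCost 2) S x y :=
  stmt5_general S x y (by norm_num) (by norm_num) (by norm_num) (by norm_num) (by norm_num)

end
end
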